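/- Let q be a power of a prime p and let k, f be positive integers with f | k and f > 1. Let χ, χ₁, χ₂ be the canonical additive characters of F_q, F_{q^f}, F_{q^k}, respectively, and for b ∈ F_{q^k} set Ω(b) = Σ_{x ∈ F_{q^k}} Σ_{y ∈ F_q^*} χ₁(y·x^{(q^k-1)/(q^f-1)}) χ₂(bx) and Δ(b) = Σ_{z ∈ F_q^*} Ω(bz). Let φ be a multiplicative character of F_{q^f}^* of order (q^f-1)/(q-1). Then for every b ∈ F_{q^k}^*: Δ(b) = q^f(q-1)²/(q^f-1) + ((-1)^{k/f-1} q^f (q-1)²/(q^f-1)) · Σ_{j=1}^{(q^f-1)/(q-1) - 1} φ^j(-1) G(φ^j, χ₁)^{k/f - 1} conj(φ^j)(b^{(q^k-1)/(q^f-1)}). -/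

import Mathlib

open scoped BigOperators

namespace HD
set_option linter.unusedSectionVars false
open Polynomial UniqueFactorizationMonoid

section
variable {F : Type} [Field F] [Fintype F]

theorem finite_monic (n : ℕ) : {f : F[X] | f.Monic ∧ f.natDegree ≤ n}.Finite := by
  have h : (Set.range (fun c : Fin (n+1) → F => ∑ i : Fin (n+1), C (c i) * X ^ (i : ℕ))).Finite :=
    Set.finite_range _
  refine h.subset ?_
  rintro f ⟨_, hf⟩
  refine ⟨fun i => f.coeff i, ?_⟩
  simp only
  rw [Fin.sum_univ_eq_sum_range (fun i => C (f.coeff i) * X ^ i) (n+1)]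
  exact (f.as_sum_range_C_mul_X_pow' (by omega)).symm

open Classical in
noncomputable def M (F : Type) [Field F] [Fintype F] (n : ℕ) : Finset F[X] :=
  (finite_monic (F := F) n).toFinset.filter (fun f => f.natDegree = n)

theorem mem_M {n : ℕ} {f : F[X]} : f ∈ M F n ↔ f.Monic ∧ f.natDegree = n := by
  simp only [M, Finset.mem_filter, Set.Finite.mem_toFinset, Set.mem_ofPred_eq]
  constructor
  · rintro ⟨h, h2⟩; exact ⟨h.1, h2⟩
  · rintro ⟨h, h2⟩; exact ⟨⟨h, h2.le⟩, h2⟩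

open Classical in
noncomputable def Irr (F : Type) [Field F] [Fintype F] (n : ℕ) : Finset F[X] :=
  (finite_monic (F := F) n).toFinset.filter (fun f => Irreducible f)

theorem mem_Irr {n : ℕ} {f : F[X]} :
    f ∈ Irr F n ↔ (f.Monic ∧ f.natDegree ≤ n) ∧ Irreducible f := by
  simp only [Irr, Finset.mem_filter, Set.Finite.mem_toFinset, Set.mem_ofPred_eq]

variable (ψ : MulChar F ℂ) (χ : AddChar F ℂ)

noncomputable def lam (f : F[X]) : ℂ := ψ ((-1) ^ f.natDegree * f.coeff 0) * χ (- f.nextCoeff)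

theorem lam_one : lam ψ χ 1 = 1 := by
  simp [lam, nextCoeff]

theorem lam_mul {f g : F[X]} (hf : f.Monic) (hg : g.Monic) :
    lam ψ χ (f * g) = lam ψ χ f * lam ψ χ g := by
  unfold lam
  rw [hf.natDegree_mul hg, hf.nextCoeff_mul hg, mul_coeff_zero, neg_add, AddChar.map_add_eq_mul,
    pow_add, show ((-1:F) ^ f.natDegree * (-1) ^ g.natDegree * (f.coeff 0 * g.coeff 0)) =
    ((-1) ^ f.natDegree * f.coeff 0) * ((-1) ^ g.natDegree * g.coeff 0) by ring, map_mul]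
  ring

theorem lam_pow {f : F[X]} (hf : f.Monic) (n : ℕ) :
    lam ψ χ (f ^ n) = lam ψ χ f ^ n := by
  induction n with
  | zero => simp [lam_one]
  | succ n ih => rw [pow_succ, lam_mul ψ χ (hf.pow n) hf, ih, pow_succ]

noncomputable def S (n : ℕ) : ℂ := ∑ f ∈ M F n, lam ψ χ f

theorem S_zero : S ψ χ 0 = 1 := by
  have : M F 0 = {1} := by
    ext f
    simp only [mem_M, Finset.mem_singleton]
    constructor
    · rintro ⟨h1, h2⟩
      exact h1.natDegree_eq_zero.mp h2
    · rintro rfl; simp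
  simp [S, this, lam_one]

theorem S_one : S ψ χ 1 = gaussSum ψ χ := by
  unfold S gaussSum
  symm
  refine Finset.sum_bij (fun a _ => X - C a) ?_ ?_ ?_ ?_
  · intro a _
    simp [mem_M, monic_X_sub_C]
  · intro a _ b _ h
    simpa using h
  · intro f hf
    rw [mem_M] at hf
    refine ⟨- f.coeff 0, Finset.mem_univ _, ?_⟩
    have := hf.1.as_sum
    rw [hf.2] at this
    simp at this
    rw [this]; simp
  · intro a _
    simp [lam, nextCoeff_X_sub_C]

theorem S_ge_two (hχ : χ ≠ 1) {n : ℕ} (hn : 2 ≤ n) : S ψ χ n = 0 := by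
  obtain ⟨a, ha⟩ := (AddChar.ne_one_iff).mp hχ
  have key : S ψ χ n = χ a * S ψ χ n := by
    unfold S
    rw [Finset.mul_sum]
    have hd : ∀ (c : F) (f : F[X]), f.Monic → f.natDegree = n →
        (f + C c * X ^ (n-1)).Monic ∧ (f + C c * X ^ (n-1)).natDegree = n := by
      intro c f hf hfn
      have hlt : (C c * X ^ (n-1)).degree < f.degree := by
        refine (degree_C_mul_X_pow_le _ _).trans_lt ?_
        rw [degree_eq_natDegree hf.ne_zero, hfn]
        exact_mod_cast (by omega)
      refine ⟨hf.add_of_left hlt, ?_⟩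
      rw [natDegree_add_eq_left_of_degree_lt hlt, hfn]
    symm
    refine Finset.sum_bij (fun f _ => f + C (-a) * X ^ (n-1)) ?_ ?_ ?_ ?_
    · intro f hf
      rw [mem_M] at hf ⊢
      exact hd _ f hf.1 hf.2
    · intro f _ g _ h
      simpa using h
    · intro f hf
      rw [mem_M] at hf
      refine ⟨f + C a * X ^ (n-1), ?_, ?_⟩
      · rw [mem_M]; exact hd _ f hf.1 hf.2
      · simp
    · intro f hf
      rw [mem_M] at hf
      have h2 := hd (-a) f hf.1 hf.2
      unfold lam
      rw [h2.2, hf.2, nextCoeff_of_natDegree_pos (by omega), nextCoeff_of_natDegree_pos (by omega),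
        h2.2, hf.2, coeff_add, coeff_add, coeff_C_mul_X_pow, coeff_C_mul_X_pow,
        if_neg (by omega), if_pos rfl, neg_add, neg_neg, AddChar.map_add_eq_mul, add_zero]
      ring
  have : (χ a - 1) * S ψ χ n = 0 := by linear_combination -key
  rcases mul_eq_zero.mp this with h | h
  · exact absurd (sub_eq_zero.mp h) ha
  · exact h

noncomputable def T (N i : ℕ) : ℂ :=
  ∑ P ∈ Irr F N, ∑ j ∈ Finset.Icc 1 N,
    if j * P.natDegree = i then (P.natDegree : ℂ) * lam ψ χ P ^ j else 0

open Classical in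
theorem degree_count {N n : ℕ} (hn : n ≤ N) {f : F[X]} (hf : f ∈ M F n) :
    n = ∑ P ∈ Irr F N, ∑ j ∈ Finset.Icc 1 N, if P ^ j ∣ f then P.natDegree else 0 := by
  rw [mem_M] at hf
  obtain ⟨hm, hd⟩ := hf
  have hf0 := hm.ne_zero
  have hfac : ∀ P ∈ normalizedFactors f, P.Monic ∧ Irreducible P ∧ P ∣ f := by
    intro P hP
    have hi := irreducible_of_normalized_factor P hP
    refine ⟨?_, hi, dvd_of_mem_normalizedFactors hP⟩
    rw [← normalize_normalized_factor P hP]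
    exact monic_normalize hi.ne_zero
  have h1 : n = ((normalizedFactors f).map natDegree).sum := by
    rw [← natDegree_multiset_prod_of_monic _ (fun P hP => (hfac P hP).1),
      natDegree_eq_of_degree_eq (degree_eq_degree_of_associated (prod_normalizedFactors hf0)), hd]
  have hsub : (normalizedFactors f).toFinset ⊆ Irr F N := by
    intro P hP
    rw [Multiset.mem_toFinset] at hP
    obtain ⟨a, b, c⟩ := hfac P hP
    rw [mem_Irr]
    exact ⟨⟨a, (natDegree_le_of_dvd c hf0).trans (by omega)⟩, b⟩
  rw [h1, Finset.sum_multiset_map_count]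
  rw [Finset.sum_subset hsub]
  · refine Finset.sum_congr rfl fun P hP => ?_
    rw [mem_Irr] at hP
    have hc : ∀ j : ℕ, P ^ j ∣ f ↔ j ≤ (normalizedFactors f).count P := by
      intro j
      rw [pow_dvd_iff_le_emultiplicity, emultiplicity_eq_count_normalizedFactors hP.2 hf0,
        hP.1.1.normalize_eq_self]
      exact_mod_cast Iff.rfl
    have hle : (normalizedFactors f).count P ≤ N := by
      have h3 := (hc _).mpr le_rfl
      have h4 := natDegree_le_of_dvd h3 hf0
      rw [natDegree_pow] at h4
      have := hP.2.natDegree_pos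
      nlinarith
    rw [← Finset.sum_filter]
    have : (Finset.Icc 1 N).filter (fun j => P ^ j ∣ f)
        = Finset.Icc 1 ((normalizedFactors f).count P) := by
      ext j
      simp only [Finset.mem_filter, Finset.mem_Icc, hc]
      omega
    rw [this]
    simp
  · intro P _ hP
    rw [Multiset.mem_toFinset] at hP
    simp [Multiset.count_eq_zero_of_notMem hP]

open Classical in
theorem sum_dvd {n j : ℕ} {P : F[X]} (hP : P.Monic) :
    (∑ f ∈ M F n, if P ^ j ∣ f then lam ψ χ f else 0)
      = if j * P.natDegree ≤ n then lam ψ χ P ^ j * S ψ χ (n - j * P.natDegree) else 0 := by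
  rw [← Finset.sum_filter]
  have hPj := hP.pow j
  split_ifs with h
  · unfold S
    rw [Finset.mul_sum]
    symm
    refine Finset.sum_bij (fun g _ => P ^ j * g) ?_ ?_ ?_ ?_
    · intro g hg
      rw [mem_M] at hg
      rw [Finset.mem_filter, mem_M]
      refine ⟨⟨hPj.mul hg.1, ?_⟩, dvd_mul_right _ _⟩
      rw [hPj.natDegree_mul hg.1, natDegree_pow, hg.2]
      omega
    · intro a _ b _ hab
      exact mul_left_cancel₀ hPj.ne_zero hab
    · intro f hf
      rw [Finset.mem_filter, mem_M] at hf
      obtain ⟨⟨h1, h2⟩, g, rfl⟩ := hf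
      have hg : g.Monic := hPj.of_mul_monic_left h1
      refine ⟨g, ?_, rfl⟩
      rw [hPj.natDegree_mul hg, natDegree_pow] at h2
      rw [mem_M]
      exact ⟨hg, by omega⟩
    · intro g hg
      rw [mem_M] at hg
      rw [lam_mul ψ χ hPj hg.1, lam_pow ψ χ hP]
  · apply Finset.sum_eq_zero
    intro f hf
    rw [Finset.mem_filter, mem_M] at hf
    exfalso
    have := natDegree_le_of_dvd hf.2 hf.1.1.ne_zero
    rw [natDegree_pow] at this
    omega

theorem newton {N n : ℕ} (hn : n ≤ N) :
    (n : ℂ) * S ψ χ n = ∑ i ∈ Finset.Icc 1 n, T ψ χ N i * S ψ χ (n - i) := by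
  classical
  have h1 : (n : ℂ) * S ψ χ n = ∑ P ∈ Irr F N, ∑ j ∈ Finset.Icc 1 N,
      (P.natDegree : ℂ) * ∑ f ∈ M F n, if P ^ j ∣ f then lam ψ χ f else 0 := by
    have : (n : ℂ) * S ψ χ n = ∑ f ∈ M F n, ∑ P ∈ Irr F N, ∑ j ∈ Finset.Icc 1 N,
        (P.natDegree : ℂ) * if P ^ j ∣ f then lam ψ χ f else 0 := by
      unfold S
      rw [Finset.mul_sum]
      refine Finset.sum_congr rfl fun f hf => ?_
      have hc := congrArg (Nat.cast : ℕ → ℂ) (degree_count hn hf)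
      push_cast at hc
      rw [hc, Finset.sum_mul]
      refine Finset.sum_congr rfl fun P _ => ?_
      rw [Finset.sum_mul]
      refine Finset.sum_congr rfl fun j _ => ?_
      split_ifs <;> simp
    rw [this, Finset.sum_comm]
    refine Finset.sum_congr rfl fun P _ => ?_
    rw [Finset.sum_comm]
    refine Finset.sum_congr rfl fun j _ => ?_
    rw [Finset.mul_sum]
  rw [h1]
  unfold T
  simp_rw [Finset.sum_mul]
  conv_rhs => rw [Finset.sum_comm]
  refine Finset.sum_congr rfl fun P hP => ?_
  rw [mem_Irr] at hP
  conv_rhs => rw [Finset.sum_comm]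
  refine Finset.sum_congr rfl fun j hj => ?_
  rw [sum_dvd ψ χ hP.1.1]
  have hpos : 1 ≤ j * P.natDegree :=
    Nat.mul_pos (Finset.mem_Icc.mp hj).1 hP.2.natDegree_pos
  simp_rw [ite_mul, zero_mul]
  rw [Finset.sum_ite_eq]
  simp only [Finset.mem_Icc, hpos, true_and]
  split_ifs
  · ring
  · simp

theorem T_eq (hχ : χ ≠ 1) {N n : ℕ} (h1 : 1 ≤ n) (hn : n ≤ N) :
    T ψ χ N n = (-1) ^ (n - 1) * gaussSum ψ χ ^ n := by
  induction n, h1 using Nat.le_induction with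
  | base =>
    have := newton ψ χ hn
    simp [S_zero, S_one] at this
    simp [← this]
  | succ n h1 ih =>
    have := newton ψ χ hn
    obtain ⟨l, rfl⟩ : ∃ l, n = l + 1 := ⟨n - 1, by omega⟩
    rw [S_ge_two ψ χ hχ (by omega), Finset.sum_Icc_succ_top (by omega),
      Finset.sum_Icc_succ_top (by omega), Finset.sum_eq_zero, Nat.sub_self, S_zero,
      Nat.add_sub_cancel_left, S_one, ih (by omega)] at this
    · simp only [Nat.add_sub_cancel] at this ⊢
      linear_combination -this
    · intro i hi
      rw [Finset.mem_Icc] at hi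
      rw [S_ge_two ψ χ hχ (by omega), mul_zero]

end

section
variable {F E : Type} [Field F] [Fintype F] [Field E] [Fintype E] [Algebra F E]
variable (ψ : MulChar F ℂ) (χ : AddChar F ℂ)

theorem finrank_eq_mul (x : E) :
    Module.finrank (IntermediateField.adjoin F {x}) E * (minpoly F x).natDegree
      = Module.finrank F E := by
  rw [← IntermediateField.adjoin.finrank (Algebra.IsIntegral.isIntegral x), mul_comm]
  exact Module.finrank_mul_finrank _ _ _

theorem lam_minpoly (x : E) :
    ψ (Algebra.norm F x) * χ (Algebra.trace F E x)
      = lam ψ χ (minpoly F x) ^ (Module.finrank (IntermediateField.adjoin F {x}) E) := by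
  have hx : IsIntegral F x := Algebra.IsIntegral.isIntegral x
  have hn := Algebra.PowerBasis.norm_gen_eq_coeff_zero_minpoly (IntermediateField.adjoin.powerBasis hx)
  have ht := PowerBasis.trace_gen_eq_nextCoeff_minpoly (IntermediateField.adjoin.powerBasis hx)
  rw [IntermediateField.adjoin.powerBasis_gen, IntermediateField.minpoly_gen] at hn ht
  rw [IntermediateField.adjoin.powerBasis_dim] at hn
  rw [Algebra.norm_eq_norm_adjoin F x, trace_eq_trace_adjoin F x, hn, ht, map_pow,
    AddChar.map_nsmul_eq_pow, ← mul_pow]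
  rfl

theorem card_fiber {P : F[X]} (hP : P.Monic) (hi : Irreducible P)
    (hd : P.natDegree ∣ Module.finrank F E) [DecidableEq F[X]] :
    (Finset.univ.filter (fun x : E => minpoly F x = P)).card = P.natDegree := by
  have hdv : P ∣ X ^ (Nat.card F) ^ (Module.finrank F E) - X :=
    (hi.natDegree_dvd_iff_dvd_X_pow_card_pow_sub_X).mp hd
  have hcard : Nat.card F ^ Module.finrank F E = Fintype.card E := by
    rw [← Nat.card_eq_fintype_card, ← Module.natCard_eq_pow_finrank]
  rw [hcard] at hdv
  have hsp : (P.map (algebraMap F E)).Splits := by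
    have h0 : (X ^ Fintype.card E - X : E[X]) ≠ 0 :=
      FiniteField.X_pow_card_sub_X_ne_zero E Fintype.one_lt_card
    refine Splits.of_dvd (g := (X ^ Fintype.card E - X : E[X])) ?_ h0 ?_
    · rw [splits_iff_card_roots, FiniteField.roots_X_pow_card_sub_X,
        FiniteField.X_pow_card_sub_X_natDegree_eq E Fintype.one_lt_card]
      rfl
    · have := map_dvd (algebraMap F E) hdv
      simpa using this
  have := card_rootSet_eq_natDegree (PerfectField.separable_of_irreducible hi) hsp
  rw [← this, ← Set.toFinset_card]
  congr 1
  ext x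
  simp only [Finset.mem_filter, Finset.mem_univ, true_and, Set.mem_toFinset, mem_rootSet]
  constructor
  · rintro rfl
    exact ⟨hi.ne_zero, minpoly.aeval _ _⟩
  · rintro ⟨_, h⟩
    exact (minpoly.eq_of_irreducible_of_monic hi h hP).symm

theorem sum_eq_T :
    ∑ x : E, ψ (Algebra.norm F x) * χ (Algebra.trace F E x)
      = T ψ χ (Module.finrank F E) (Module.finrank F E) := by
  classical
  set m := Module.finrank F E with hm
  have hmpos : 0 < m := Module.finrank_pos
  have hmem : ∀ x ∈ (Finset.univ : Finset E), minpoly F x ∈ Irr F m := by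
    intro x _
    have hx : IsIntegral F x := Algebra.IsIntegral.isIntegral x
    rw [mem_Irr]
    exact ⟨⟨minpoly.monic hx, Nat.le_of_dvd hmpos (Dvd.intro_left _ (finrank_eq_mul x))⟩,
      minpoly.irreducible hx⟩
  rw [← Finset.sum_fiberwise_of_maps_to hmem]
  unfold T
  refine Finset.sum_congr rfl fun P hP => ?_
  rw [mem_Irr] at hP
  have hpos := hP.2.natDegree_pos
  by_cases hd : P.natDegree ∣ m
  · obtain ⟨j, hj⟩ := hd
    have hjpos : 0 < j := Nat.pos_of_ne_zero (by rintro rfl; omega)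
    have h1 : ∀ i : ℕ, i * P.natDegree = m ↔ i = j := by
      intro i
      rw [hj, mul_comm]
      exact Nat.mul_right_inj hpos.ne'
    simp_rw [h1]
    rw [Finset.sum_ite_eq', if_pos (Finset.mem_Icc.mpr ⟨hjpos, by nlinarith⟩)]
    rw [Finset.sum_congr rfl (g := fun _ => lam ψ χ P ^ j), Finset.sum_const,
      card_fiber hP.1.1 hP.2 (Dvd.intro _ hj.symm), nsmul_eq_mul]
    intro x hx
    rw [Finset.mem_filter] at hx
    have h2 := (h1 _).mp (hx.2 ▸ finrank_eq_mul x)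
    rw [lam_minpoly, hx.2, h2]
  · rw [Finset.sum_eq_zero, Finset.sum_eq_zero]
    · intro j _
      rw [if_neg]
      intro h
      exact hd (Dvd.intro_left _ h)
    · intro x hx
      rw [Finset.mem_filter] at hx
      exact absurd (hx.2 ▸ Dvd.intro_left _ (finrank_eq_mul x)) hd

theorem hasse_davenport (hχ : χ ≠ 1) :
    ∑ x : E, ψ (Algebra.norm F x) * χ (Algebra.trace F E x)
      = (-1) ^ (Module.finrank F E - 1) * gaussSum ψ χ ^ (Module.finrank F E) := by
  rw [sum_eq_T, T_eq ψ χ hχ Module.finrank_pos le_rfl]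
end
end HD

namespace HD
section
variable {K F : Type} [Field K] [Fintype K] [Field F] [Fintype F] [Algebra K F]

theorem range_units {w : Fˣ} (hw : w ^ (Fintype.card K - 1) = 1) :
    ∃ y : Kˣ, Units.map (algebraMap K F : K →* F) y = w := by
  classical
  have hinj : Function.Injective (Units.map (algebraMap K F : K →* F)) :=
    Units.map_injective (algebraMap K F).injective
  have hcK : Fintype.card Kˣ = Fintype.card K - 1 := Fintype.card_units K
  have hsub : Finset.univ.image (Units.map (algebraMap K F : K →* F)) ⊆
      Finset.univ.filter (fun a : Fˣ => a ^ (Fintype.card K - 1) = 1) := by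
    intro a ha
    rw [Finset.mem_image] at ha
    obtain ⟨y, _, rfl⟩ := ha
    simp only [Finset.mem_filter, Finset.mem_univ, true_and]
    rw [← map_pow, ← hcK, pow_card_eq_one, map_one]
  have heq := Finset.eq_of_subset_of_card_le hsub (by
    rw [Finset.card_image_of_injective _ hinj, Finset.card_univ, hcK]
    exact IsCyclic.card_pow_eq_one_le (by have := Fintype.one_lt_card (α := K); omega))
  have : w ∈ Finset.univ.image (Units.map (algebraMap K F : K →* F)) := by
    rw [heq]; simpa using hw
  simpa using this


theorem ker_iff (φ : MulChar F ℂ) {N : ℕ} (hφ : orderOf φ = N)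
    (hN : Fintype.card F - 1 = N * (Fintype.card K - 1)) (w : Fˣ) : φ w = 1 ↔ w ^ (Fintype.card K - 1) = 1 := by
  classical
  obtain ⟨g, hg⟩ := IsCyclic.exists_generator (α := Fˣ)
  have hcF : Fintype.card Fˣ = Fintype.card F - 1 := Fintype.card_units F
  have hog : orderOf g = N * (Fintype.card K - 1) := by
    rw [orderOf_eq_card_of_forall_mem_zpowers hg, Nat.card_eq_fintype_card, hcF, hN]
  have hpos : 0 < Fintype.card K - 1 := by have := Fintype.one_lt_card (α := K); omega
  have hpow : ∀ a : Fˣ, ∃ i : ℕ, g ^ i = a := by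
    intro a
    exact (mem_powers_iff_mem_zpowers.mpr (hg a))
  obtain ⟨i, rfl⟩ := hpow w
  have h2 : (g ^ i) ^ (Fintype.card K - 1) = 1 ↔ N ∣ i := by
    rw [← pow_mul, ← orderOf_dvd_iff_pow_eq_one, hog]
    exact Nat.mul_dvd_mul_iff_right hpos
  rw [h2, ← hφ, orderOf_dvd_iff_pow_eq_one]
  have h3 : φ ((g ^ i : Fˣ) : F) = (φ ^ i) (g : F) := by
    rw [MulChar.pow_apply_coe, Units.val_pow_eq_pow_val, map_pow]
  rw [h3]
  constructor
  · intro h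
    ext a
    obtain ⟨l, rfl⟩ := hpow a
    rw [Units.val_pow_eq_pow_val, map_pow, h, one_pow]
    simp
  · intro h
    rw [h]; simp

theorem sum_pow_inv (φ : MulChar F ℂ) {N : ℕ} (hφ : orderOf φ = N)
    (hN : Fintype.card F - 1 = N * (Fintype.card K - 1)) [DecidableEq K] [DecidableEq F] (s : F) :
    ∑ j ∈ Finset.range N, (φ ^ j)⁻¹ s =
      ∑ y : Kˣ, if algebraMap K F y = s then (N : ℂ) else 0 := by
  classical
  by_cases hs : s = 0
  · subst hs
    rw [Finset.sum_eq_zero, Finset.sum_eq_zero]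
    · intro y _
      rw [if_neg]
      simp
    · intro j _
      exact MulChar.map_zero _
  · lift s to Fˣ using isUnit_iff_ne_zero.mpr hs
    have h1 : ∀ j : ℕ, (φ ^ j)⁻¹ (s : F) = (φ⁻¹ (s : F)) ^ j := by
      intro j
      rw [← inv_pow, MulChar.pow_apply_coe]
    simp_rw [h1]
    have hinv : φ⁻¹ (s : F) = (φ (s : F))⁻¹ := by
      rw [MulChar.inv_apply_eq_inv', ]
    by_cases h : φ (s : F) = 1
    · obtain ⟨y, hy⟩ := range_units ((ker_iff φ hφ hN s).mp h)
      have hy' : algebraMap K F y = s := by rw [← hy]; rfl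
      rw [hinv, h]
      have h4 : ∀ y' : Kˣ, algebraMap K F y' = s ↔ y = y' := by
        intro y'
        rw [← hy', (algebraMap K F).injective.eq_iff, Units.val_inj, eq_comm]
      simp_rw [h4]
      simp
    · rw [Finset.sum_eq_zero (s := (Finset.univ : Finset Kˣ))]
      · have h5 : (φ⁻¹ (s : F)) ^ N = 1 := by
          rw [← MulChar.pow_apply_coe, inv_pow, ← hφ, pow_orderOf_eq_one]; simp
        have h6 := geom_sum_mul (φ⁻¹ (s : F)) N
        rw [h5, sub_self] at h6
        rcases mul_eq_zero.mp h6 with h7 | h7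
        · exact h7
        · exfalso
          apply h
          rw [hinv, sub_eq_zero, inv_eq_one] at h7
          exact h7
      · intro y _
        rw [if_neg]
        intro hy
        apply h
        rw [ker_iff φ hφ hN]
        have : s = Units.map (algebraMap K F : K →* F) y := by ext; exact hy.symm
        rw [this, ← map_pow, ← Fintype.card_units, pow_card_eq_one, map_one]

theorem coset_sum (φ : MulChar F ℂ) {N : ℕ} (hφ : orderOf φ = N)
    (hN : Fintype.card F - 1 = N * (Fintype.card K - 1)) [DecidableEq K] (χ : AddChar F ℂ) {u : F} (hu : u ≠ 0) :
    (N : ℂ) * ∑ y : Kˣ, χ (algebraMap K F y * u) =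
      ∑ j ∈ Finset.range N, gaussSum (φ ^ j)⁻¹ χ * (φ ^ j) u := by
  classical
  have h1 : ∀ j, gaussSum (φ ^ j)⁻¹ χ * (φ ^ j) u = ∑ s : F, χ (s * u) * (φ ^ j)⁻¹ s := by
    intro j
    unfold gaussSum
    rw [Finset.sum_mul, ← Equiv.sum_comp (Equiv.mulRight₀ u hu)]
    refine Finset.sum_congr rfl fun s _ => ?_
    have : (φ ^ j)⁻¹ u * (φ ^ j) u = 1 := by
      rw [← MulChar.mul_apply, inv_mul_cancel]
      exact MulChar.one_apply hu.isUnit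
    simp only [Equiv.mulRight₀_apply, map_mul]
    linear_combination ((φ ^ j)⁻¹ s * χ (s * u)) * this
  simp_rw [h1]
  rw [Finset.sum_comm]
  simp_rw [← Finset.mul_sum, sum_pow_inv (K := K) φ hφ hN, Finset.mul_sum]
  rw [Finset.sum_comm]
  refine Finset.sum_congr rfl fun y _ => ?_
  simp [mul_comm]

end

theorem twisted {F E : Type} [Field F] [Fintype F] [Field E] [Fintype E] [Algebra F E]
    (ψ : MulChar F ℂ) (χ : AddChar F ℂ) (hχ : χ ≠ 1) {c : E} (hc : c ≠ 0) :
    ∑ x : E, ψ (Algebra.norm F x) * χ (Algebra.trace F E (c * x))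
      = ψ⁻¹ (Algebra.norm F c) *
        ((-1) ^ (Module.finrank F E - 1) * gaussSum ψ χ ^ (Module.finrank F E)) := by
  rw [← hasse_davenport (E := E) ψ χ hχ, Finset.mul_sum]
  conv_rhs => rw [← Equiv.sum_comp (Equiv.mulLeft₀ c hc)]
  refine Finset.sum_congr rfl fun x _ => ?_
  have hn : Algebra.norm F c ≠ 0 := Algebra.norm_ne_zero_iff.mpr hc
  have : ψ⁻¹ (Algebra.norm F c) * ψ (Algebra.norm F c) = 1 := by
    rw [← MulChar.mul_apply, inv_mul_cancel]
    exact MulChar.one_apply hn.isUnit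
  simp only [Equiv.mulLeft₀_apply, map_mul]
  linear_combination (-(ψ (Algebra.norm F x) * χ (Algebra.trace F E (c * x)))) * this

theorem gauss_prod {F : Type} [Field F] [Fintype F] {ψ : MulChar F ℂ} (hψ : ψ ≠ 1)
    {χ : AddChar F ℂ} (hχ : χ ≠ 1) :
    gaussSum ψ⁻¹ χ * gaussSum ψ χ = ψ (-1) * Fintype.card F := by
  have h1 := gaussSum_mul_gaussSum_eq_card hψ (AddChar.IsPrimitive.of_ne_one hχ)
  have h2 := mul_gaussSum_inv_eq_gaussSum ψ⁻¹ χ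
  have h3 : ψ⁻¹ (-1) = ψ (-1) := by
    rw [MulChar.inv_apply']; simp
  rw [← h2, h3]
  linear_combination ψ (-1) * h1

theorem delta {K F E : Type} [Field K] [Fintype K] [Field F] [Fintype F] [Field E] [Fintype E]
    [DecidableEq K] [Algebra K F] [Algebra F E] [Algebra K E] [IsScalarTower K F E]
    (φ : MulChar F ℂ) {N : ℕ} (hφ : orderOf φ = N)
    (hN : Fintype.card F - 1 = N * (Fintype.card K - 1))
    (χ : AddChar F ℂ) (hχ : χ ≠ 1) {b : E} (hb : b ≠ 0) :
    (N : ℂ) * ∑ z : Kˣ, ∑ x : E, ∑ y : Kˣ, χ (algebraMap K F y * Algebra.norm F x) *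
        χ (Algebra.trace F E (b * algebraMap K E z * x)) =
      (N : ℂ) * (Fintype.card Kˣ : ℂ) ^ 2 + (Fintype.card Kˣ : ℂ) *
       ∑ j ∈ Finset.range N, gaussSum (φ ^ j)⁻¹ χ * ((φ ^ j)⁻¹ (Algebra.norm F b) *
        ((-1) ^ (Module.finrank F E - 1) * gaussSum (φ ^ j) χ ^ (Module.finrank F E))) := by
  classical
  have hx : ∀ x : E, (N : ℂ) * ∑ y : Kˣ, χ (algebraMap K F y * Algebra.norm F x) =
      ∑ j ∈ Finset.range N, gaussSum (φ ^ j)⁻¹ χ * (φ ^ j) (Algebra.norm F x)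
       + if x = 0 then (N : ℂ) * (Fintype.card Kˣ : ℂ) else 0 := by
    intro x
    split_ifs with h
    · subst h
      rw [Algebra.norm_zero, Finset.sum_eq_zero (s := Finset.range N)]
      · simp
      · intro j _
        rw [MulChar.map_zero, mul_zero]
    · rw [coset_sum φ hφ hN χ (Algebra.norm_ne_zero_iff.mpr h), add_zero]
  have hz : ∀ z : Kˣ, (N : ℂ) * ∑ x : E, ∑ y : Kˣ, χ (algebraMap K F y * Algebra.norm F x) *
        χ (Algebra.trace F E (b * algebraMap K E z * x)) =
      (N : ℂ) * (Fintype.card Kˣ : ℂ) +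
       ∑ j ∈ Finset.range N, gaussSum (φ ^ j)⁻¹ χ * ((φ ^ j)⁻¹ (Algebra.norm F b) *
        ((-1) ^ (Module.finrank F E - 1) * gaussSum (φ ^ j) χ ^ (Module.finrank F E))) := by
    intro z
    have hz0 : algebraMap K E z ≠ 0 := by simp
    have hzF : φ (algebraMap K F z) = 1 := by
      have := (ker_iff (K := K) φ hφ hN (Units.map (algebraMap K F : K →* F) z)).mpr (by
        rw [← map_pow, ← Fintype.card_units, pow_card_eq_one, map_one])
      exact this
    have h1 : ∀ j, (φ ^ j)⁻¹ (Algebra.norm F (b * algebraMap K E z))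
        = (φ ^ j)⁻¹ (Algebra.norm F b) := by
      intro j
      rw [map_mul, map_mul, IsScalarTower.algebraMap_apply K F E, Algebra.norm_algebraMap, map_pow]
      have h2 : (φ ^ j)⁻¹ (algebraMap K F z) = 1 := by
        rw [MulChar.inv_apply_eq_inv', show algebraMap K F z =
          ((Units.map (algebraMap K F : K →* F) z : Fˣ) : F) from rfl, MulChar.pow_apply_coe]
        change (φ (algebraMap K F z) ^ j)⁻¹ = 1
        rw [hzF]; simp
      rw [h2]; simp
    rw [Finset.mul_sum]
    simp_rw [← Finset.sum_mul, ← mul_assoc (N : ℂ), hx, add_mul, Finset.sum_add_distrib]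
    rw [add_comm]
    congr 1
    · simp
    · simp_rw [Finset.sum_mul]
      rw [Finset.sum_comm]
      refine Finset.sum_congr rfl fun j _ => ?_
      simp_rw [mul_assoc (gaussSum (φ ^ j)⁻¹ χ)]
      rw [← Finset.mul_sum, twisted _ χ hχ (mul_ne_zero hb hz0), h1]
  rw [Finset.mul_sum]
  simp_rw [hz]
  rw [Finset.sum_const, Finset.card_univ, nsmul_eq_mul]
  ring

end HD

/-- **Lemma 5.** Let `q` be a power of a prime `p`, `f ∣ k`, `f > 1`.
With `χ₁, χ₂` the canonical additive characters of `F_{q^f}`, `F_{q^k}`,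
`Ω(b) = ∑_{x ∈ F_{q^k}} ∑_{y ∈ F_qˣ} χ₁(y x^{(q^k-1)/(q^f-1)}) χ₂(bx)` and
`Δ(b) = ∑_{z ∈ F_qˣ} Ω(bz)`, and `φ` a multiplicative character of `F_{q^f}ˣ` of order
`(q^f-1)/(q-1)`, for every `b ∈ F_{q^k}ˣ` we have
`Δ(b) = q^f(q-1)²/(q^f-1) + ((-1)^{k/f-1} q^f(q-1)²/(q^f-1)) ·
  ∑_{j=1}^{(q^f-1)/(q-1)-1} φ^j(-1) G(φ^j,χ₁)^{k/f-1} conj(φ^j)(b^{(q^k-1)/(q^f-1)})`.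
Here `x^{(q^k-1)/(q^f-1)}` is the norm from `Fk` to `Ff` (hypothesis `hnorm`). -/
theorem stmt3 (p e q f k : ℕ) [Fact p.Prime] (he : 0 < e) (hq : q = p ^ e)
    (hf : 1 < f) (hfk : f ∣ k)
    (Fq Ff Fk : Type) [Field Fq] [Field Ff] [Field Fk]
    [Fintype Fq] [Fintype Ff] [Fintype Fk] [DecidableEq Fq]
    [Algebra Fq Ff] [Algebra Ff Fk] [Algebra Fq Fk] [IsScalarTower Fq Ff Fk]
    [Algebra (ZMod p) Ff] [Algebra (ZMod p) Fk]
    (hcq : Fintype.card Fq = q) (hcf : Fintype.card Ff = q ^ f)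
    (hck : Fintype.card Fk = q ^ k)
    (hnorm : ∀ x : Fk,
      algebraMap Ff Fk (Algebra.norm Ff x) = x ^ ((q ^ k - 1) / (q ^ f - 1)))
    (χ₁ : AddChar Ff ℂ)
    (hχ₁ : ∀ x : Ff, χ₁ x =
      Complex.exp (2 * Real.pi * Complex.I * ((Algebra.trace (ZMod p) Ff x).val : ℂ) / p))
    (χ₂ : AddChar Fk ℂ)
    (hχ₂ : ∀ x : Fk, χ₂ x =
      Complex.exp (2 * Real.pi * Complex.I * ((Algebra.trace (ZMod p) Fk x).val : ℂ) / p))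
    (φ : MulChar Ff ℂ) (hφ : orderOf φ = (q ^ f - 1) / (q - 1))
    (b : Fk) (hb : b ≠ 0) :
    ∑ z : Fqˣ, ∑ x : Fk, ∑ y : Fqˣ,
        χ₁ (algebraMap Fq Ff (y : Fq) * Algebra.norm Ff x) *
          χ₂ (b * algebraMap Fq Fk (z : Fq) * x)
      = (q : ℂ) ^ f * ((q : ℂ) - 1) ^ 2 / ((q : ℂ) ^ f - 1) +
        (-1 : ℂ) ^ (k / f - 1) * (q : ℂ) ^ f * ((q : ℂ) - 1) ^ 2 / ((q : ℂ) ^ f - 1) *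
          ∑ j ∈ Finset.Icc 1 ((q ^ f - 1) / (q - 1) - 1),
            (φ ^ j) (-1) * gaussSum (φ ^ j) χ₁ ^ (k / f - 1) *
              (starRingEnd ℂ) ((φ ^ j) (Algebra.norm Ff b)) := by
  have hp : p.Prime := Fact.out
  have hq1 : 1 < q := by rw [← hcq]; exact Fintype.one_lt_card
  have hf0 : f ≠ 0 := by omega
  -- degree
  have hm : k / f = Module.finrank Ff Fk := by
    have h1 : Fintype.card Fk = Fintype.card Ff ^ Module.finrank Ff Fk := Module.card_eq_pow_finrank
    rw [hck, hcf, ← pow_mul] at h1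
    rw [Nat.pow_right_injective hq1 h1]
    exact Nat.mul_div_cancel_left _ (by omega)
  have hmpos : 0 < Module.finrank Ff Fk := Module.finrank_pos
  -- the index
  have hdvd : q - 1 ∣ q ^ f - 1 := by simpa using Nat.sub_dvd_pow_sub_pow q 1 f
  set N := (q ^ f - 1) / (q - 1) with hNdef
  have hN : q ^ f - 1 = N * (q - 1) := (Nat.div_mul_cancel hdvd).symm
  have hQ1 : 1 < q ^ f := Nat.one_lt_pow hf0 hq1
  have hNpos : 0 < N := Nat.pos_of_ne_zero (by rintro h; rw [h] at hN; omega)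
  have hNC : (q : ℂ) ^ f - 1 = N * ((q : ℂ) - 1) := by
    have := congrArg (Nat.cast : ℕ → ℂ) hN
    rw [Nat.cast_sub hQ1.le, Nat.cast_mul, Nat.cast_sub hq1.le] at this
    simpa using this
  have hQC : (q : ℂ) ^ f - 1 ≠ 0 := by
    rw [sub_ne_zero]; exact_mod_cast hQ1.ne'
  -- additive characters
  have htower : IsScalarTower (ZMod p) Ff Fk :=
    IsScalarTower.of_algebraMap_eq' (Subsingleton.elim _ _)
  have hχ : ∀ x : Fk, χ₂ x = χ₁ (Algebra.trace Ff Fk x) := by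
    intro x
    rw [hχ₁, hχ₂, Algebra.trace_trace]
  have hχ1 : χ₁ ≠ 1 := by
    obtain ⟨a, ha⟩ := Algebra.trace_surjective (ZMod p) Ff 1
    rw [AddChar.ne_one_iff]
    refine ⟨a, ?_⟩
    rw [hχ₁, ha, ZMod.val_one]
    have := (Complex.isPrimitiveRoot_exp p hp.ne_zero).ne_one hp.one_lt
    simpa using this
  have hD := HD.delta (K := Fq) (F := Ff) (E := Fk) φ hφ (by rw [hcf, hcq]; exact hN) χ₁ hχ1 hb
  have hcu : (Fintype.card Fqˣ : ℂ) = (q : ℂ) - 1 := by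
    rw [Fintype.card_units, hcq, Nat.cast_sub hq1.le, Nat.cast_one]
  simp_rw [← hχ] at hD
  rw [hcu] at hD
  obtain ⟨m, hm'⟩ : ∃ m, Module.finrank Ff Fk = m + 1 := ⟨_, (Nat.sub_add_cancel hmpos).symm⟩
  have hsum : ∑ j ∈ Finset.range N, gaussSum (φ ^ j)⁻¹ χ₁ * ((φ ^ j)⁻¹ (Algebra.norm Ff b) *
        ((-1) ^ (Module.finrank Ff Fk - 1) * gaussSum (φ ^ j) χ₁ ^ (Module.finrank Ff Fk)))
      = 1 + (-1) ^ m * (q : ℂ) ^ f * ∑ j ∈ Finset.Icc 1 (N - 1),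
            (φ ^ j) (-1) * gaussSum (φ ^ j) χ₁ ^ m *
              (starRingEnd ℂ) ((φ ^ j) (Algebra.norm Ff b)) := by
    have hr : Finset.range N = insert 0 (Finset.Icc 1 (N - 1)) := by
      ext j
      simp only [Finset.mem_range, Finset.mem_insert, Finset.mem_Icc]
      omega
    rw [hr, Finset.sum_insert (by simp), Finset.mul_sum]
    congr 1
    · have hnb : Algebra.norm Ff b ≠ 0 := Algebra.norm_ne_zero_iff.mpr hb
      rw [pow_zero, inv_one, gaussSum_one_left hχ1, MulChar.one_apply hnb.isUnit, hm',
        Nat.add_sub_cancel, pow_succ]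
      have : ((-1 : ℂ) ^ m) * (-1) ^ m = 1 := by rw [← mul_pow]; simp
      linear_combination this
    · refine Finset.sum_congr rfl fun j hj => ?_
      rw [Finset.mem_Icc] at hj
      have hne : φ ^ j ≠ 1 := pow_ne_one_of_lt_orderOf (by omega) (by rw [hφ]; omega)
      have hg := HD.gauss_prod hne hχ1
      rw [hcf] at hg
      push_cast at hg
      have hs : (starRingEnd ℂ) ((φ ^ j) (Algebra.norm Ff b)) = (φ ^ j)⁻¹ (Algebra.norm Ff b) :=
        MulChar.star_apply' _ _
      rw [hs, hm', Nat.add_sub_cancel, pow_succ]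
      linear_combination ((φ ^ j)⁻¹ (Algebra.norm Ff b) * (-1) ^ m *
        gaussSum (φ ^ j) χ₁ ^ m) * hg
  rw [hsum] at hD
  rw [hm, hm', Nat.add_sub_cancel]
  generalize (∑ j ∈ Finset.Icc 1 (N - 1), (φ ^ j) (-1) * gaussSum (φ ^ j) χ₁ ^ m *
              (starRingEnd ℂ) ((φ ^ j) (Algebra.norm Ff b))) = Z at hD ⊢
  generalize (∑ z : Fqˣ, ∑ x : Fk, ∑ y : Fqˣ, χ₁ (algebraMap Fq Ff (y : Fq) * Algebra.norm Ff x) *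
          χ₂ (b * algebraMap Fq Fk (z : Fq) * x)) = D at hD ⊢
  rw [div_mul_eq_mul_div, ← add_div, eq_div_iff hQC]
  linear_combination ((q : ℂ) - 1) * hD + (D - ((q : ℂ) - 1) ^ 2) * hNC
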